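/- arXiv:1905.05886 — 4 statements merged into one kernel-verified Lean document; each statement's English description precedes it below -/
import Mathlib

section
/- Let A be a skew left brace and let I be a proper strong left ideal of A. Define ρ_x(a) = λ_a(x)' ∘ a ∘ x for a,x ∈ A. Then for every x ∈ A one has λ_x(I) = I, λ_x(A∖I) = A∖I, ρ_x(I) = I and ρ_x(A∖I) = A∖I; consequently the set-theoretic solution (A,r_A) with r_A(a,b) = (λ_a(b), λ_a(b)'∘a∘b) is decomposable as A = I ∪ (A∖I). -/
/-- A skew left brace: `(A,+)` and `(A,∘)` are groups (sharing the same identity `0`)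
such that `a ∘ (b + c) = a ∘ b - a + a ∘ c`.  Here `circ` is the operation `∘` and
`cinv a` is the inverse of `a` in `(A,∘)`. -/
class SkewBrace (A : Type*) extends AddGroup A where
  circ : A → A → A
  cinv : A → A
  circ_assoc : ∀ a b c : A, circ (circ a b) c = circ a (circ b c)
  zero_circ : ∀ a : A, circ 0 a = a
  circ_zero : ∀ a : A, circ a 0 = a
  cinv_circ : ∀ a : A, circ (cinv a) a = 0
  circ_cinv : ∀ a : A, circ a (cinv a) = 0
  compat : ∀ a b c : A, circ a (b + c) = circ a b + -a + circ a c

open SkewBrace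

/-- `lam a b = -a + a ∘ b`. -/
def lam {A : Type*} [SkewBrace A] (a b : A) : A := -a + circ a b

/-- The star operation `a * b = lam a b - b = -a + a ∘ b - b`. -/
def bstar {A : Type*} [SkewBrace A] (a b : A) : A := lam a b - b

/-- `X * Y`: the subgroup of `(A,+)` generated by `{x * y : x ∈ X, y ∈ Y}`. -/
def starSpan {A : Type*} [SkewBrace A] (X Y : Set A) : AddSubgroup A :=
  AddSubgroup.closure {z | ∃ x ∈ X, ∃ y ∈ Y, z = bstar x y}

/-- The right series of `st`: `rseriesOf st 0 = A = A^(1)` and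
`rseriesOf st n = A^(n+1)`, so that `A^(n+1) = A^(n) * A`. -/
def rseriesOf {G : Type*} [AddGroup G] (st : G → G → G) : ℕ → AddSubgroup G
  | 0 => ⊤
  | n + 1 => AddSubgroup.closure {z | ∃ u ∈ rseriesOf st n, ∃ a : G, z = st u a}

/-! The maps `λ_x` form a left action and the maps `ρ_x` a right action of `(A,∘)`, so all of them
are bijective. Moreover `ρ_x(a)` is the conjugate of `λ_{u'}(a)` by `u'` in `(A,+)`, where
`u = λ_a(x)`. Hence `λ_x` and `ρ_x` both preserve every set that is closed under all `λ_a` and under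
additive conjugation, and the complement of such a set is again of this kind. -/

namespace SkewBrace

variable {A : Type*} [SkewBrace A]

theorem cinv_circ_circ (a b : A) : circ (cinv a) (circ a b) = b := by
  rw [← circ_assoc, cinv_circ, zero_circ]

theorem circ_cinv_circ (a b : A) : circ a (circ (cinv a) b) = b := by
  rw [← circ_assoc, circ_cinv, zero_circ]

theorem circ_left_cancel {a b c : A} (h : circ a b = circ a c) : b = c := by
  rw [← cinv_circ_circ a b, h, cinv_circ_circ]

theorem add_lam (a b : A) : a + lam a b = circ a b :=
  add_neg_cancel_left a _

theorem lam_zero_left (b : A) : lam 0 b = b := by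
  rw [lam, zero_circ, neg_zero, zero_add]

theorem lam_add (a b c : A) : lam a (b + c) = lam a b + lam a c := by
  simp only [lam, compat, add_assoc]

theorem lam_circ_left (a b c : A) : lam (circ a b) c = lam a (lam b c) := by
  apply add_left_cancel (a := lam a b)
  calc
    lam a b + lam (circ a b) c = -a + circ (circ a b) c := by
      rw [lam, add_assoc, add_lam]
    _ = lam a (circ b c) := by rw [circ_assoc, lam]
    _ = lam a b + lam a (lam b c) := by rw [← add_lam b c, lam_add]

theorem lam_cinv_lam (a b : A) : lam (cinv a) (lam a b) = b := by
  rw [← lam_circ_left, cinv_circ, lam_zero_left]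

theorem lam_lam_cinv (a b : A) : lam a (lam (cinv a) b) = b := by
  rw [← lam_circ_left, circ_cinv, lam_zero_left]

theorem lam_surjective (a : A) : Function.Surjective (lam a) :=
  Function.RightInverse.surjective (lam_lam_cinv a)

/-- The map `ρ_x(a) = λ_a(x)' ∘ a ∘ x`, giving the second component of the solution associated with
`A`; the acting element `x` comes first. -/
def rho (x a : A) : A := circ (cinv (lam a x)) (circ a x)

theorem lam_circ_rho (a x : A) : circ (lam a x) (rho x a) = circ a x :=
  circ_cinv_circ _ _

theorem rho_zero_left (a : A) : rho 0 a = a := by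
  have hlam : lam a 0 = 0 := by rw [lam, circ_zero, neg_add_cancel]
  simpa only [hlam, zero_circ, circ_zero] using lam_circ_rho a 0

theorem lam_circ_right (a x y : A) : lam a (circ x y) = circ (lam a x) (lam (rho x a) y) :=
  calc
    lam a (circ x y) = lam a x + lam (circ a x) y := by rw [← add_lam x y, lam_add, lam_circ_left]
    _ = circ (lam a x) (lam (rho x a) y) := by rw [← lam_circ_rho, lam_circ_left, add_lam]

theorem rho_circ (x y a : A) : rho (circ x y) a = rho y (rho x a) := by
  apply circ_left_cancel (a := lam a (circ x y))
  calc
    circ (lam a (circ x y)) (rho (circ x y) a) = circ (circ a x) y := by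
      rw [lam_circ_rho, circ_assoc]
    _ = circ (lam a x) (circ (rho x a) y) := by rw [← lam_circ_rho a x, circ_assoc]
    _ = circ (lam a (circ x y)) (rho y (rho x a)) := by
      rw [← lam_circ_rho (rho x a) y, ← circ_assoc, ← lam_circ_right]

theorem rho_surjective (x : A) : Function.Surjective (rho x) := fun a =>
  ⟨rho (cinv x) a, by rw [← rho_circ, cinv_circ, rho_zero_left]⟩

theorem rho_eq_conj_lam (x a : A) :
    rho x a = cinv (lam a x) + lam (cinv (lam a x)) a + -cinv (lam a x) := by
  rw [rho, ← add_lam a x, compat, cinv_circ, add_zero, add_lam]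

/-- The set-theoretic solution `r_A(a, b) = (λ_a(b), λ_a(b)' ∘ a ∘ b)` of the Yang–Baxter equation
associated with `A`. -/
def solution (p : A × A) : A × A := (lam p.1 p.2, rho p.2 p.1)

-- If `r_A(a, b) = (u, v)`, then `a ∘ b = u ∘ v` and `u = -a + a ∘ b`, which determines `a` and `b`.
theorem solution_surjective : Function.Surjective (solution (A := A)) := by
  rintro ⟨u, v⟩
  let a := circ u v + -u
  let b := circ (cinv a) (circ u v)
  have hab : circ a b = circ u v := circ_cinv_circ _ _
  have hlam : lam a b = u := by
    rw [lam, hab, neg_add_rev, neg_neg, neg_add_cancel_right]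
  have hrho : rho b a = v := by rw [rho, hlam, hab, cinv_circ_circ]
  exact ⟨(a, b), Prod.ext hlam hrho⟩

/-- A subset of `A` closed under every `λ_a` and under conjugation in `(A,+)`. The strong left
ideals are the additive subgroups with this property; unlike that of a subgroup, this notion passes
to complements. -/
structure IsLamConjInvariant (S : Set A) : Prop where
  lam_mem : ∀ a, ∀ b ∈ S, lam a b ∈ S
  conj_mem : ∀ b ∈ S, ∀ a, a + b + -a ∈ S

namespace IsLamConjInvariant

variable {S T : Set A}

theorem lam_mem_iff (hS : IsLamConjInvariant S) {a b : A} : lam a b ∈ S ↔ b ∈ S :=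
  ⟨fun h => lam_cinv_lam a b ▸ hS.lam_mem (cinv a) _ h, hS.lam_mem a b⟩

theorem conj_mem_iff (hS : IsLamConjInvariant S) {a b : A} : a + b + -a ∈ S ↔ b ∈ S := by
  refine ⟨fun h => ?_, fun h => hS.conj_mem b h a⟩
  simpa only [add_assoc, neg_neg, neg_add_cancel_left, neg_add_cancel, add_zero]
    using hS.conj_mem _ h (-a)

theorem rho_mem_iff (hS : IsLamConjInvariant S) {x a : A} : rho x a ∈ S ↔ a ∈ S := by
  rw [rho_eq_conj_lam, hS.conj_mem_iff, hS.lam_mem_iff]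

theorem compl (hS : IsLamConjInvariant S) : IsLamConjInvariant Sᶜ where
  lam_mem _ _ := mt hS.lam_mem_iff.mp
  conj_mem _ hb _ := mt hS.conj_mem_iff.mp hb

theorem image_lam (hS : IsLamConjInvariant S) (x : A) : lam x '' S = S := by
  have hpre : lam x ⁻¹' S = S := Set.ext fun _ => hS.lam_mem_iff
  simpa only [hpre] using (lam_surjective x).image_preimage S

theorem image_rho (hS : IsLamConjInvariant S) (x : A) : rho x '' S = S := by
  have hpre : rho x ⁻¹' S = S := Set.ext fun _ => hS.rho_mem_iff
  simpa only [hpre] using (rho_surjective x).image_preimage S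

theorem image_solution_prod (hS : IsLamConjInvariant S) (hT : IsLamConjInvariant T) :
    solution '' (S ×ˢ T) = T ×ˢ S := by
  have hpre : solution ⁻¹' (T ×ˢ S) = S ×ˢ T := Set.ext fun _ =>
    (and_congr hT.lam_mem_iff hS.rho_mem_iff).trans and_comm
  rw [← hpre, solution_surjective.image_preimage]

end IsLamConjInvariant

end SkewBrace

theorem stmt3_general {A : Type*} [SkewBrace A] {S : Set A} (hS : IsLamConjInvariant S) :
    (∀ x : A, lam x '' S = S) ∧
    (∀ x : A, lam x '' Sᶜ = Sᶜ) ∧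
    (∀ x : A, rho x '' S = S) ∧
    (∀ x : A, rho x '' Sᶜ = Sᶜ) ∧
    (solution '' (S ×ˢ S) = S ×ˢ S) ∧
    (solution '' (Sᶜ ×ˢ Sᶜ) = Sᶜ ×ˢ Sᶜ) ∧
    (solution '' (S ×ˢ Sᶜ) = Sᶜ ×ˢ S) ∧
    (solution '' (Sᶜ ×ˢ S) = S ×ˢ Sᶜ) :=
  have hSc := hS.compl
  ⟨hS.image_lam, hSc.image_lam, hS.image_rho, hSc.image_rho,
    hS.image_solution_prod hS, hSc.image_solution_prod hSc,
    hS.image_solution_prod hSc, hSc.image_solution_prod hS⟩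

/-- if `I` is a proper strong left ideal then `lam x` and
`ρ_x : a ↦ (lam a x)' ∘ a ∘ x` preserve both `I` and its complement; consequently
the solution `r_A (a,b) = (lam a b, (lam a b)' ∘ a ∘ b)` is decomposable
as `A = I ∪ (A \ I)`. -/
theorem stmt3 {A : Type*} [SkewBrace A] (I : AddSubgroup A)
    (hleft : ∀ a : A, ∀ x ∈ I, lam a x ∈ I)
    (hnormal : I.Normal)
    (hproper : (I : Set A) ≠ Set.univ)
    (ρ : A → A → A) (hρ : ∀ x a, ρ x a = circ (cinv (lam a x)) (circ a x))
    (r : A × A → A × A)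
    (hr : ∀ p : A × A, r p = (lam p.1 p.2, circ (cinv (lam p.1 p.2)) (circ p.1 p.2))) :
    (∀ x : A, lam x '' (I : Set A) = (I : Set A)) ∧
    (∀ x : A, lam x '' ((I : Set A)ᶜ) = (I : Set A)ᶜ) ∧
    (∀ x : A, ρ x '' (I : Set A) = (I : Set A)) ∧
    (∀ x : A, ρ x '' ((I : Set A)ᶜ) = (I : Set A)ᶜ) ∧
    (r '' ((I : Set A) ×ˢ (I : Set A)) = (I : Set A) ×ˢ (I : Set A)) ∧
    (r '' (((I : Set A)ᶜ) ×ˢ ((I : Set A)ᶜ)) = ((I : Set A)ᶜ) ×ˢ ((I : Set A)ᶜ)) ∧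
    (r '' ((I : Set A) ×ˢ ((I : Set A)ᶜ)) = ((I : Set A)ᶜ) ×ˢ (I : Set A)) ∧
    (r '' (((I : Set A)ᶜ) ×ˢ (I : Set A)) = (I : Set A) ×ˢ ((I : Set A)ᶜ)) := by
  obtain ⟨rfl, rfl⟩ : ρ = rho ∧ r = solution := ⟨funext₂ hρ, funext hr⟩
  exact stmt3_general ⟨hleft, hnormal.conj_mem⟩
end

section
/- Let A be a skew left brace such that A = B + C, where B and C are left ideals of A that are trivial as skew left braces. Then for all b ∈ B and c ∈ C: b∘c∘b'∘c' = b∘c − c∘b = b + λ_b(c) − λ_c(b) − c, and this element lies in Ker λ (i.e., λ applied to it is the identity map of A). -/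
open SkewBrace

/-!
The map `λ` is a homomorphism from `(A, ∘)` to the endomorphisms of `(A, +)`. If `b ∈ B` and
`c ∈ C`, then `λ_b` fixes `B` and preserves `C`, while `λ_c` fixes `C` and preserves `B`; hence
`λ_b` and `λ_c` commute on `B` and on `C`, and therefore on `A`, because `B` and `C` generate
`(A, +)`. So the commutator `k` of `b` and `c` in `(A, ∘)` lies in `Ker λ`, and
`b ∘ c = k ∘ (c ∘ b) = k + λ_k (c ∘ b) = k + c ∘ b`.
-/

theorem commute_of_fixes_of_fixes_of_sup_eq_top {G : Type*} [AddGroup G] {f g : AddMonoid.End G}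
    {B C : AddSubgroup G} (hBC : B ⊔ C = ⊤)
    (hfB : ∀ x ∈ B, f x = x) (hgB : ∀ x ∈ B, g x ∈ B)
    (hgC : ∀ x ∈ C, g x = x) (hfC : ∀ x ∈ C, f x ∈ C) : Commute f g := by
  have hB : B ≤ AddMonoidHom.eqLocus (f * g) (g * f) := fun x hx =>
    show f (g x) = g (f x) by rw [hfB x hx, hfB _ (hgB x hx)]
  have hC : C ≤ AddMonoidHom.eqLocus (f * g) (g * f) := fun x hx =>
    show f (g x) = g (f x) by rw [hgC x hx, hgC _ (hfC x hx)]
  have h_top : ⊤ ≤ AddMonoidHom.eqLocus (f * g) (g * f) := hBC ▸ sup_le hB hC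
  exact AddMonoidHom.ext fun x => h_top (AddSubgroup.mem_top x)

namespace SkewBrace

variable {A : Type*} [SkewBrace A]

theorem circ_eq_add_lam (a b : A) : circ a b = a + lam a b :=
  (add_neg_cancel_left a (circ a b)).symm

/-- The map `λ_a`, bundled as an element of the endomorphism monoid of `(A, +)`, so that
commutation of such maps can be expressed by `Commute`. -/
def lamEnd (a : A) : AddMonoid.End A :=
  AddMonoidHom.mk' (lam a) (lam_add a)

theorem lamEnd_zero : lamEnd (0 : A) = 1 :=
  AddMonoidHom.ext fun x => show -0 + circ 0 x = x by rw [zero_circ, neg_zero, zero_add]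

theorem lamEnd_circ (a b : A) : lamEnd (circ a b) = lamEnd a * lamEnd b := by
  refine AddMonoidHom.ext fun x => ?_
  have h_sum : circ a b + lam (circ a b) x = circ a b + lam a (lam b x) :=
    calc circ a b + lam (circ a b) x
      _ = circ a (circ b x) := by rw [← circ_eq_add_lam, circ_assoc]
      _ = a + lam a (b + lam b x) := by rw [circ_eq_add_lam a, circ_eq_add_lam b]
      _ = a + lam a b + lam a (lam b x) := by rw [lam_add, add_assoc]
      _ = circ a b + lam a (lam b x) := by rw [← circ_eq_add_lam]
  exact add_left_cancel h_sum

theorem lamEnd_mul_lamEnd_cinv (a : A) : lamEnd a * lamEnd (cinv a) = 1 := by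
  rw [← lamEnd_circ, circ_cinv, lamEnd_zero]

theorem lam_eq_self_of_add_eq_circ {a b : A} (h : a + b = circ a b) : lam a b = b := by
  rw [lam, ← h, neg_add_cancel_left]

theorem circ_sub_circ (a b : A) : circ a b - circ b a = a + lam a b - lam b a - b := by
  rw [circ_eq_add_lam a b, circ_eq_add_lam b a, sub_add_eq_sub_sub_swap]

/-- The commutator `a ∘ b ∘ a' ∘ b'` of `a` and `b` in the group `(A, ∘)`, the element shown to
lie in `Ker λ`. Mathlib's `⁅a, b⁆` does not apply, as `∘` is not registered as a `Group`. -/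
def circCommutator (a b : A) : A :=
  circ (circ (circ a b) (cinv a)) (cinv b)

theorem circCommutator_circ (a b : A) : circ (circCommutator a b) (circ b a) = circ a b :=
  calc circ (circCommutator a b) (circ b a)
    _ = circ (circ (circ a b) (cinv a)) (circ (circ (cinv b) b) a) := by
      simp only [circCommutator, circ_assoc]
    _ = circ (circ a b) (circ (cinv a) a) := by rw [cinv_circ, zero_circ, circ_assoc]
    _ = circ a b := by rw [cinv_circ, circ_zero]

theorem lamEnd_circCommutator {a b : A} (h : Commute (lamEnd a) (lamEnd b)) :
    lamEnd (circCommutator a b) = 1 :=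
  calc lamEnd (circCommutator a b)
    _ = lamEnd a * lamEnd b * lamEnd (cinv a) * lamEnd (cinv b) := by
      simp only [circCommutator, lamEnd_circ]
    _ = lamEnd b * (lamEnd a * lamEnd (cinv a)) * lamEnd (cinv b) := by
      rw [h.eq, mul_assoc (lamEnd b)]
    _ = 1 := by rw [lamEnd_mul_lamEnd_cinv, mul_one, lamEnd_mul_lamEnd_cinv]

theorem lam_circCommutator {a b : A} (h : Commute (lamEnd a) (lamEnd b)) (x : A) :
    lam (circCommutator a b) x = x :=
  DFunLike.congr_fun (lamEnd_circCommutator h) x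

theorem circCommutator_eq_sub {a b : A} (h : Commute (lamEnd a) (lamEnd b)) :
    circCommutator a b = circ a b - circ b a := by
  refine eq_sub_of_add_eq ?_
  calc circCommutator a b + circ b a
    _ = circ (circCommutator a b) (circ b a) := by
      rw [circ_eq_add_lam (circCommutator a b), lam_circCommutator h]
    _ = circ a b := circCommutator_circ a b

end SkewBrace

theorem stmt6_general {A : Type*} [SkewBrace A] (B C : AddSubgroup A)
    (hB : ∀ a : A, ∀ x ∈ B, lam a x ∈ B)
    (hC : ∀ a : A, ∀ x ∈ C, lam a x ∈ C)
    (hBtriv : ∀ x ∈ B, ∀ y ∈ B, x + y = circ x y)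
    (hCtriv : ∀ x ∈ C, ∀ y ∈ C, x + y = circ x y)
    (hsup : B ⊔ C = ⊤) :
    ∀ b ∈ B, ∀ c ∈ C,
      circ (circ (circ b c) (cinv b)) (cinv c) = circ b c - circ c b ∧
      circ b c - circ c b = b + lam b c - lam c b - c ∧
      (∀ x : A, lam (circ b c - circ c b) x = x) := by
  intro b hb c hc
  have h_comm : Commute (lamEnd b) (lamEnd c) :=
    commute_of_fixes_of_fixes_of_sup_eq_top hsup
      (fun x hx => lam_eq_self_of_add_eq_circ (hBtriv b hb x hx)) (hB c)
      (fun x hx => lam_eq_self_of_add_eq_circ (hCtriv c hc x hx)) (hC b)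
  have h_sub : circCommutator b c = circ b c - circ c b := circCommutator_eq_sub h_comm
  exact ⟨h_sub, circ_sub_circ b c, h_sub ▸ lam_circCommutator h_comm⟩

/-- if `A = B + C` with `B, C` left ideals trivial as skew braces, then for
`b ∈ B`, `c ∈ C`: `b ∘ c ∘ b' ∘ c' = b ∘ c - c ∘ b = b + lam b c - lam c b - c`, and this
element lies in `Ker lam`. -/
theorem stmt6 {A : Type*} [SkewBrace A] (B C : AddSubgroup A)
    (hB : ∀ a : A, ∀ x ∈ B, lam a x ∈ B)
    (hC : ∀ a : A, ∀ x ∈ C, lam a x ∈ C)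
    (hBtriv : ∀ x ∈ B, ∀ y ∈ B, x + y = circ x y)
    (hCtriv : ∀ x ∈ C, ∀ y ∈ C, x + y = circ x y)
    (hfact : ∀ a : A, ∃ b ∈ B, ∃ c ∈ C, a = b + c) :
    ∀ b ∈ B, ∀ c ∈ C,
      circ (circ (circ b c) (cinv b)) (cinv c) = circ b c - circ c b ∧
      circ b c - circ c b = b + lam b c - lam c b - c ∧
      (∀ x : A, lam (circ b c - circ c b) x = x) :=
  stmt6_general B C hB hC hBtriv hCtriv <| eq_top_iff.mpr fun a _ =>
    let ⟨_, hb, _, hc, ha⟩ := hfact a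
    ha ▸ AddSubgroup.add_mem_sup hb hc
end

section
/- Let (G,+) be a group with an exact factorization through subgroups B and C (i.e., G = B + C and B ∩ C = {0}), and let A = (G,+,∘) be the skew left brace with x∘y = b + y + c, where x = b + c, b ∈ B, c ∈ C. If (C,+) is a normal subgroup of (G,+), then C is an ideal of A; and if (B,+) is a normal subgroup of (G,+), then B is an ideal of A. -/
open SkewBrace

section Ideals

variable {G H : Type*} [AddGroup G] [AddGroup H]

/-- The operation `x ∘ y = b + y + c` of a factorization `x = b + c`, which is encoded by its
component maps `β` and `γ`: `b = β x` and `c = γ x`. -/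
def factorCirc (β γ : G → G) (x y : G) : G := β x + y + γ x

/-- Ideals of a skew left brace, for an operation `circ` and an inverse map `cinv` given as plain
functions. The map `λ_a` is unfolded to `x ↦ -a + a ∘ x`. -/
def IsBraceIdeal (circ : G → G → G) (cinv : G → G) (I : AddSubgroup G) : Prop :=
  (∀ a : G, ∀ x ∈ I, -a + circ a x ∈ I) ∧ I.Normal ∧
    ∀ a : G, ∀ x ∈ I, circ (circ a x) (cinv a) ∈ I

theorem isBraceIdeal_ker {circ : G → G → G} {cinv : G → G} (f : G →+ H) (op : H → H → H)
    (op_zero : ∀ h, op h 0 = h) (map_circ : ∀ x y, f (circ x y) = op (f x) (f y))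
    (circ_cinv : ∀ x, circ x (cinv x) = 0) : IsBraceIdeal circ cinv f.ker := by
  have map_circ_ker (a : G) {x : G} (hx : x ∈ f.ker) : f (circ a x) = f a := by
    rw [map_circ, f.mem_ker.mp hx, op_zero]
  refine ⟨fun a x hx => f.mem_ker.mpr ?_, f.normal_ker, fun a x hx => f.mem_ker.mpr ?_⟩
  · rw [map_add, map_neg, map_circ_ker a hx, neg_add_cancel]
  · calc
      f (circ (circ a x) (cinv a)) = op (f a) (f (cinv a)) := by rw [map_circ, map_circ_ker a hx]
      _ = f (circ a (cinv a)) := (map_circ a (cinv a)).symm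
      _ = 0 := by rw [circ_cinv, map_zero]

section Factorization

variable {β γ : G → G}

theorem map_factorCirc_of_map_right_eq_zero (f : G →+ H) (hdec : ∀ g, g = β g + γ g)
    (hγ : ∀ g, f (γ g) = 0) (x y : G) : f (factorCirc β γ x y) = f x + f y := by
  have map_left : f x = f (β x) := by simpa [hγ] using congrArg f (hdec x)
  simp [factorCirc, hγ, map_left]

theorem map_factorCirc_of_map_left_eq_zero (f : G →+ H) (hdec : ∀ g, g = β g + γ g)
    (hβ : ∀ g, f (β g) = 0) (x y : G) : f (factorCirc β γ x y) = f y + f x := by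
  have map_right : f x = f (γ x) := by simpa [hβ] using congrArg f (hdec x)
  simp [factorCirc, hβ, map_right]

variable {cinv : G → G}

theorem isBraceIdeal_right_factor (C : AddSubgroup G) [C.Normal] (hγ : ∀ g, γ g ∈ C)
    (hdec : ∀ g, g = β g + γ g) (circ_cinv : ∀ x, factorCirc β γ x (cinv x) = 0) :
    IsBraceIdeal (factorCirc β γ) cinv C := by
  have map_circ := map_factorCirc_of_map_right_eq_zero (QuotientAddGroup.mk' C) hdec
    fun g => (QuotientAddGroup.eq_zero_iff _).mpr (hγ g)
  simpa only [QuotientAddGroup.ker_mk'] using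
    isBraceIdeal_ker (QuotientAddGroup.mk' C) (fun u v => u + v) add_zero map_circ circ_cinv

theorem isBraceIdeal_left_factor (B : AddSubgroup G) [B.Normal] (hβ : ∀ g, β g ∈ B)
    (hdec : ∀ g, g = β g + γ g) (circ_cinv : ∀ x, factorCirc β γ x (cinv x) = 0) :
    IsBraceIdeal (factorCirc β γ) cinv B := by
  have map_circ := map_factorCirc_of_map_left_eq_zero (QuotientAddGroup.mk' B) hdec
    fun g => (QuotientAddGroup.eq_zero_iff _).mpr (hβ g)
  simpa only [QuotientAddGroup.ker_mk'] using
    isBraceIdeal_ker (QuotientAddGroup.mk' B) (fun u v => v + u) zero_add map_circ circ_cinv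

end Factorization

end Ideals

theorem stmt16_general {G : Type*} [AddGroup G] (B C : AddSubgroup G) (β γ : G → G)
    (hβ : ∀ g, β g ∈ B) (hγ : ∀ g, γ g ∈ C) (hdec : ∀ g, g = β g + γ g)
    (cinv : G → G) (circ_cinv : ∀ x, factorCirc β γ x (cinv x) = 0) :
    (C.Normal → IsBraceIdeal (factorCirc β γ) cinv C) ∧
    (B.Normal → IsBraceIdeal (factorCirc β γ) cinv B) :=
  ⟨fun _ => isBraceIdeal_right_factor C hγ hdec circ_cinv,
    fun _ => isBraceIdeal_left_factor B hβ hdec circ_cinv⟩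

/-- for the skew brace obtained from an exact factorization `G = B + C`,
if `(C,+)` is normal in `(G,+)` then `C` is an ideal of `A`, and if `(B,+)` is normal
in `(G,+)` then `B` is an ideal of `A`.  (An ideal is a left ideal normal in both
`(A,+)` and `(A,∘)`; `cinv` is the inverse for `∘`.) -/
theorem stmt16 {G : Type*} [AddGroup G] (B C : AddSubgroup G)
    (hfact : ∀ g : G, ∃ b ∈ B, ∃ c ∈ C, g = b + c)
    (hdisj : B ⊓ C = ⊥)
    (β γ : G → G) (hβ : ∀ g : G, β g ∈ B) (hγ : ∀ g : G, γ g ∈ C)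
    (hdec : ∀ g : G, g = β g + γ g)
    (circ : G → G → G) (hcirc : ∀ x y : G, circ x y = β x + y + γ x)
    (lam : G → G → G) (hlam : ∀ a x : G, lam a x = -a + circ a x)
    (cinv : G → G) (hcinv : ∀ x : G, circ x (cinv x) = 0 ∧ circ (cinv x) x = 0) :
    (C.Normal →
      (∀ a : G, ∀ x ∈ C, lam a x ∈ C) ∧ C.Normal ∧
      (∀ a : G, ∀ x ∈ C, circ (circ a x) (cinv a) ∈ C)) ∧
    (B.Normal →
      (∀ a : G, ∀ x ∈ B, lam a x ∈ B) ∧ B.Normal ∧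
      (∀ a : G, ∀ x ∈ B, circ (circ a x) (cinv a) ∈ B)) := by
  obtain ⟨rfl, rfl⟩ : lam = (fun a x => -a + circ a x) ∧ circ = factorCirc β γ :=
    ⟨funext₂ hlam, funext₂ hcirc⟩
  exact stmt16_general B C β γ hβ hγ hdec cinv fun x => (hcinv x).1
end

section
/- Let (G,+) be a group with an exact factorization through subgroups B and C (i.e., G = B + C and B ∩ C = {0}), and let A = (G,+,∘) be the skew left brace with x∘y = b + y + c, where x = b + c, b ∈ B, c ∈ C. Assume that both (B,+) and (C,+) are normal subgroups of (G,+) and that (C,+) is abelian. Then A is right nilpotent of class at most three, i.e., A^(3) = 0 (equivalently, (x*y)*z = 0 for all x,y,z ∈ A). -/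
open SkewBrace

/-! Since `B` and `C` are normal and intersect trivially, they commute elementwise, so
`x * y = -x + (β x + y + γ x) - y` is the commutator of `-γ x` and `γ y`.
Every element of `C` is of the form `-γ x`, and `γ` fixes `C` pointwise, so from the second term
on the right series of the brace is the lower central series of `C`. -/

open scoped addCommutatorElement

theorem addCommutatorElement_add_right_of_addCommute {G : Type*} [AddGroup G] {a c : G} (b : G)
    (h : AddCommute a c) : ⁅a, b + c⁆ = ⁅a, b⁆ := by
  rw [addCommutatorElement_add_right_eq_add_addConj, h.addCommutator_eq, add_zero,
    add_neg_cancel_right]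

theorem lowerCentralSeries_succ_eq_bot_of_isAddCommutative {G : Type*} [AddGroup G]
    (C : AddSubgroup G) [hC : IsAddCommutative C] (n : ℕ) :
    C.lowerCentralSeries (n + 1) = ⊥ := by
  have hone : C.lowerCentralSeries 1 = ⊥ := AddSubgroup.addCommutator_self_eq_bot_iff.mpr hC
  exact eq_bot_mono (C.lowerCentralSeries_antitone (Nat.le_add_left 1 n)) hone

theorem apply_apply_eq_zero_of_rseriesOf_two_eq_bot {G : Type*} [AddGroup G] {st : G → G → G}
    (h : rseriesOf st 2 = ⊥) (x y z : G) : st (st x y) z = 0 := by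
  have hxy : st x y ∈ rseriesOf st 1 :=
    AddSubgroup.subset_closure ⟨x, AddSubgroup.mem_top x, y, rfl⟩
  have hxyz : st (st x y) z ∈ rseriesOf st 2 := AddSubgroup.subset_closure ⟨st x y, hxy, z, rfl⟩
  rwa [h, AddSubgroup.mem_bot] at hxyz

/-- An exact factorization `G = B + C`, given by the functions `β` and `γ` that send `g` to its
components in `B` and in `C`. -/
structure IsExactFactorization {G : Type*} [AddGroup G] (B C : AddSubgroup G) (β γ : G → G) :
    Prop where
  disjoint : Disjoint B C
  left_mem : ∀ g, β g ∈ B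
  right_mem : ∀ g, γ g ∈ C
  left_add_right : ∀ g, β g + γ g = g

/-- The operation `x * y = -x + x ∘ y - y` of the skew left brace of an exact factorization with
components `β` and `γ`, where `x ∘ y = β x + y + γ x`. -/
def factorizationStar {G : Type*} [AddGroup G] (β γ : G → G) (x y : G) : G :=
  -x + (β x + y + γ x) - y

namespace IsExactFactorization

variable {G : Type*} [AddGroup G] {B C : AddSubgroup G} {β γ : G → G}

theorem right_apply_of_mem (h : IsExactFactorization B C β γ) {c : G} (hc : c ∈ C) :
    γ c = c := by
  have hβC : β c ∈ C := by
    rw [← C.add_mem_cancel_right (h.right_mem c), h.left_add_right]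
    exact hc
  have hβ : β c = 0 := AddSubgroup.disjoint_def.mp h.disjoint (h.left_mem c) hβC
  simpa only [hβ, zero_add] using h.left_add_right c

theorem image_right_eq_self (h : IsExactFactorization B C β γ) {s : Set G} (hs : s ⊆ C) :
    γ '' s = s :=
  Set.EqOn.image_eq_self fun _ hx => h.right_apply_of_mem (hs hx)

theorem range_right (h : IsExactFactorization B C β γ) : Set.range γ = C :=
  Set.Subset.antisymm (Set.range_subset_iff.mpr h.right_mem)
    fun c hc => ⟨c, h.right_apply_of_mem hc⟩

variable [hB : B.Normal] [hC : C.Normal]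

theorem addCommute (h : IsExactFactorization B C β γ) {b c : G} (hb : b ∈ B) (hc : c ∈ C) :
    AddCommute b c :=
  AddSubgroup.addCommute_of_normal_of_disjoint B C hB hC h.disjoint b c hb hc

theorem factorizationStar_eq_addCommutatorElement (h : IsExactFactorization B C β γ) (x y : G) :
    factorizationStar β γ x y = ⁅-γ x, γ y⁆ :=
  calc -x + (β x + y + γ x) - y
    _ = -(β x + γ x) + (β x + y + γ x) - y := by rw [h.left_add_right]
    _ = ⁅-γ x, y⁆ := by
      simp only [addCommutatorElement_def, neg_add_rev, neg_neg, add_assoc, neg_add_cancel_left,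
        sub_eq_add_neg]
    _ = ⁅-γ x, γ y + β y⁆ := by
      rw [← (h.addCommute (h.left_mem y) (h.right_mem y)).eq, h.left_add_right]
    _ = ⁅-γ x, γ y⁆ :=
      addCommutatorElement_add_right_of_addCommute (γ y)
        (h.addCommute (h.left_mem y) (C.neg_mem (h.right_mem x))).symm

theorem closure_factorizationStar_eq_addCommutator (h : IsExactFactorization B C β γ)
    {K L : AddSubgroup G} (hKL : γ '' K = L) :
    AddSubgroup.closure {z | ∃ u ∈ K, ∃ a, z = factorizationStar β γ u a} = ⁅L, C⁆ := by
  simp only [h.factorizationStar_eq_addCommutatorElement]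
  apply le_antisymm
  · rw [AddSubgroup.closure_le]
    rintro _ ⟨u, hu, a, rfl⟩
    have hγu : γ u ∈ L := hKL.subset (Set.mem_image_of_mem γ hu)
    exact AddSubgroup.addCommutator_mem_addCommutator (L.neg_mem hγu) (h.right_mem a)
  · rw [AddSubgroup.addCommutator_le]
    intro l hl c hc
    obtain ⟨u, hu, hγu⟩ : -l ∈ γ '' K := hKL.superset (L.neg_mem hl)
    refine AddSubgroup.subset_closure ⟨u, hu, c, ?_⟩
    rw [hγu, neg_neg, h.right_apply_of_mem hc]

theorem image_right_rseriesOf (h : IsExactFactorization B C β γ) (n : ℕ) :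
    γ '' (rseriesOf (factorizationStar β γ) n) = C.lowerCentralSeries n := by
  induction n with
  | zero =>
    rw [rseriesOf, AddSubgroup.coe_top, Set.image_univ, AddSubgroup.lowerCentralSeries_zero,
      h.range_right]
  | succ n ih =>
    have hsucc : rseriesOf (factorizationStar β γ) (n + 1) = C.lowerCentralSeries (n + 1) :=
      h.closure_factorizationStar_eq_addCommutator ih
    rw [hsucc]
    exact h.image_right_eq_self (C.lowerCentralSeries_le_self (n + 1))

theorem rseriesOf_factorizationStar_succ (h : IsExactFactorization B C β γ) (n : ℕ) :
    rseriesOf (factorizationStar β γ) (n + 1) = C.lowerCentralSeries (n + 1) :=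
  h.closure_factorizationStar_eq_addCommutator (h.image_right_rseriesOf n)

end IsExactFactorization

theorem stmt17_general {G : Type*} [AddGroup G] (B C : AddSubgroup G)
    (hdisj : B ⊓ C = ⊥)
    (β γ : G → G) (hβ : ∀ g : G, β g ∈ B) (hγ : ∀ g : G, γ g ∈ C)
    (hdec : ∀ g : G, g = β g + γ g)
    (circ : G → G → G) (hcirc : ∀ x y : G, circ x y = β x + y + γ x)
    (lam : G → G → G) (hlam : ∀ a x : G, lam a x = -a + circ a x)
    (star : G → G → G) (hstar : ∀ a x : G, star a x = lam a x - x)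
    (hBn : B.Normal) (hCn : C.Normal) (n : ℕ) :
    rseriesOf star (n + 1) = C.lowerCentralSeries (n + 1) := by
  have h : IsExactFactorization B C β γ :=
    ⟨disjoint_iff.mpr hdisj, hβ, hγ, fun g => (hdec g).symm⟩
  obtain rfl : star = factorizationStar β γ := by
    funext a x
    rw [hstar, hlam, hcirc, factorizationStar]
  exact h.rseriesOf_factorizationStar_succ n

/-- for the skew brace obtained from an exact factorization `G = B + C`
with both `(B,+)` and `(C,+)` normal in `(G,+)` and `(C,+)` abelian, the skew brace is
right nilpotent of class at most three: `A^(3) = 0` (here `rseriesOf star 2 = A^(3)`),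
equivalently `(x*y)*z = 0` for all `x,y,z`. -/
theorem stmt17 {G : Type*} [AddGroup G] (B C : AddSubgroup G)
    (hfact : ∀ g : G, ∃ b ∈ B, ∃ c ∈ C, g = b + c)
    (hdisj : B ⊓ C = ⊥)
    (β γ : G → G) (hβ : ∀ g : G, β g ∈ B) (hγ : ∀ g : G, γ g ∈ C)
    (hdec : ∀ g : G, g = β g + γ g)
    (circ : G → G → G) (hcirc : ∀ x y : G, circ x y = β x + y + γ x)
    (lam : G → G → G) (hlam : ∀ a x : G, lam a x = -a + circ a x)
    (star : G → G → G) (hstar : ∀ a x : G, star a x = lam a x - x)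
    (hBn : B.Normal) (hCn : C.Normal)
    (hCab : ∀ x ∈ C, ∀ y ∈ C, x + y = y + x) :
    rseriesOf star 2 = ⊥ ∧ ∀ x y z : G, star (star x y) z = 0 := by
  have : IsAddCommutative C := ⟨⟨fun x y => Subtype.ext (hCab x x.2 y y.2)⟩⟩
  have hbot : rseriesOf star 2 = ⊥ :=
    (stmt17_general B C hdisj β γ hβ hγ hdec circ hcirc lam hlam star hstar hBn hCn 1).trans
      (lowerCentralSeries_succ_eq_bot_of_isAddCommutative C 1)
  exact ⟨hbot, apply_apply_eq_zero_of_rseriesOf_two_eq_bot hbot⟩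
end
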